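/- arXiv:1904.05096 — 2 statements merged into one kernel-verified Lean document; each statement's English description precedes it below -/
import Mathlib

section
/- Let G = (ℝ/ℤ)^d be a torus of any dimension d ≥ 1, equipped with its Haar probability measure μ_G, and let F₁, F₂, F₃ : G → [0,1] be measurable functions. Set δ_i := ∫_G F_i dμ_G for i = 1,2,3 and δ := min(δ₁, δ₂, δ₃). Then for any distinct integers m₁, m₂, m₃: if δ₁ + δ₂ + δ₃ ≤ 1 + 2δ, then ∫_G ∫_G F₁(x + m₁y) F₂(x + m₂y) F₃(x + m₃y) dμ_G(x) dμ_G(y) ≥ (1/4)·max(δ₁ + δ₂ + δ₃ − 1, 0)²; and if δ₁ + δ₂ + δ₃ > 1 + 2δ, then ∫_G ∫_G F₁(x + m₁y) F₂(x + m₂y) F₃(x + m₃y) dμ_G(x) dμ_G(y) ≥ δ·(δ₁ + δ₂ + δ₃ − 1 − δ). -/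
open Filter MeasureTheory
open scoped Classical

instance : Fact ((0 : ℝ) < 1) := ⟨one_pos⟩

/-- Haar probability measure on the torus `(ℝ/ℤ)^d`. -/
noncomputable def torusMeasure (d : ℕ) : Measure (Fin d → AddCircle (1 : ℝ)) :=
  Measure.pi fun _ => volume

/-!
Pollard's argument for sumset bounds, run on a connected group. Translating by a common multiple of
`y` turns the triple integral into `∫ W * F₃`, where `W z = ∫ F₁ (z + p • y) * F₂ (z + q • y)`, and
`W * h ≥ min W t + t * h - t` for `0 ≤ h ≤ 1`. It therefore suffices to show
`∫ min W t ≥ t * (δ₁ + δ₂ - t)` for `t ≤ min δ₁ δ₂` and `δ₁ + δ₂ - t ≤ 1`.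

As a function of `F₁` alone, the left-hand side is invariant under translation and submodular. By
connectedness, `F₁` has a translate meeting it in mass exactly `δ₁ - r`, for any small `r`; passing
to the "intersection" and "union" of `F₁` and this translate shows that the infimum over all `F₁` of
mass `δ₁` is midpoint concave in `δ₁`. So the worst case is at the endpoints `δ₁ = t` and
`δ₁ = 1 + t - δ₂`, where the inequality follows from `W ≤ δ₁` and from `W ≥ δ₁ + δ₂ - 1`.
-/

/-! ### Functions with values in the unit interval -/

/-- `f` is measurable with values in `[0, 1]`: the functional analogue of a measurable set. -/
structure IsUnitValued {X : Type*} [MeasurableSpace X] (f : X → ℝ) : Prop where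
  measurable : Measurable f
  mem_Icc : ∀ x, f x ∈ Set.Icc (0 : ℝ) 1

/-- `n` and `u` are unit-valued analogues of the intersection and the union of two sets `a` and `b`.
That `u` dominates `a` and `b` is encoded in the identity `n + u = a + b`. -/
structure IsMeetJoin {X : Type*} [MeasurableSpace X] (a b n u : X → ℝ) : Prop where
  isUnitValued_meet : IsUnitValued n
  isUnitValued_join : IsUnitValued u
  meet_le_left : ∀ x, n x ≤ a x
  meet_le_right : ∀ x, n x ≤ b x
  add_eq : ∀ x, n x + u x = a x + b x

section UnitValued

variable {X : Type*} [MeasurableSpace X] {f g : X → ℝ}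

lemma IsUnitValued.nonneg (hf : IsUnitValued f) (x : X) : 0 ≤ f x := (hf.mem_Icc x).1

lemma IsUnitValued.le_one (hf : IsUnitValued f) (x : X) : f x ≤ 1 := (hf.mem_Icc x).2

lemma IsUnitValued.mul (hf : IsUnitValued f) (hg : IsUnitValued g) :
    IsUnitValued fun x => f x * g x :=
  ⟨hf.measurable.mul hg.measurable, fun x => unitInterval.mul_mem (hf.mem_Icc x) (hg.mem_Icc x)⟩

lemma IsUnitValued.one_sub (hf : IsUnitValued f) : IsUnitValued fun x => 1 - f x :=
  ⟨hf.measurable.const_sub 1, fun x => Set.Icc.mem_iff_one_sub_mem.mp (hf.mem_Icc x)⟩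

lemma IsUnitValued.min_const (hf : IsUnitValued f) {t : ℝ} (ht : t ∈ Set.Icc (0 : ℝ) 1) :
    IsUnitValued fun x => min (f x) t :=
  ⟨hf.measurable.min measurable_const,
    fun x => ⟨le_min (hf.nonneg x) ht.1, (min_le_right _ _).trans ht.2⟩⟩

lemma IsUnitValued.comp (hf : IsUnitValued f) {Y : Type*} [MeasurableSpace Y] {φ : Y → X}
    (hφ : Measurable φ) : IsUnitValued fun y => f (φ y) :=
  ⟨hf.measurable.comp hφ, fun y => hf.mem_Icc (φ y)⟩

lemma IsUnitValued.integrable (hf : IsUnitValued f) {μ : Measure X} [IsFiniteMeasure μ] :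
    Integrable f μ :=
  .of_mem_Icc 0 1 hf.measurable.aemeasurable (.of_forall hf.mem_Icc)

lemma IsUnitValued.memLp (hf : IsUnitValued f) {μ : Measure X} [IsFiniteMeasure μ]
    (p : ENNReal) : MemLp f p μ :=
  memLp_of_bounded (.of_forall hf.mem_Icc) hf.measurable.aestronglyMeasurable p

lemma IsUnitValued.integral_mem_Icc (hf : IsUnitValued f) {μ : Measure X}
    [IsProbabilityMeasure μ] : ∫ x, f x ∂μ ∈ Set.Icc (0 : ℝ) 1 :=
  ⟨integral_nonneg hf.nonneg, by
    simpa using integral_mono hf.integrable (integrable_const (1 : ℝ)) hf.le_one (μ := μ)⟩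

lemma IsUnitValued.isMeetJoin_mul (hf : IsUnitValued f) (hg : IsUnitValued g) :
    IsMeetJoin f g (fun x => f x * g x) (fun x => 1 - (1 - f x) * (1 - g x)) where
  isUnitValued_meet := hf.mul hg
  isUnitValued_join := (hf.one_sub.mul hg.one_sub).one_sub
  meet_le_left x := mul_le_of_le_one_right (hf.nonneg x) (hg.le_one x)
  meet_le_right x := mul_le_of_le_one_left (hg.nonneg x) (hf.le_one x)
  add_eq x := by ring

lemma IsUnitValued.isMeetJoin_self (hf : IsUnitValued f) {θ : ℝ} (hθ : θ ∈ Set.Icc (0 : ℝ) 1) :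
    IsMeetJoin f f (fun x => f x - θ * (f x * (1 - f x)))
      (fun x => f x + θ * (f x * (1 - f x))) := by
  have hv : IsUnitValued fun x => f x * (1 - f x) := hf.mul hf.one_sub
  have hv0 (x : X) : 0 ≤ θ * (f x * (1 - f x)) := mul_nonneg hθ.1 (hv.nonneg x)
  have hv1 (x : X) : θ * (f x * (1 - f x)) ≤ f x * (1 - f x) :=
    mul_le_of_le_one_left (hv.nonneg x) hθ.2
  exact {
    isUnitValued_meet := ⟨hf.measurable.sub (hv.measurable.const_mul θ), fun x =>
      ⟨by nlinarith [hv1 x, sq_nonneg (f x)], by linarith [hv0 x, hf.le_one x]⟩⟩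
    isUnitValued_join := ⟨hf.measurable.add (hv.measurable.const_mul θ), fun x =>
      ⟨by linarith [hv0 x, hf.nonneg x], by nlinarith [hv1 x, sq_nonneg (1 - f x)]⟩⟩
    meet_le_left := fun x => by linarith [hv0 x]
    meet_le_right := fun x => by linarith [hv0 x]
    add_eq := fun x => by ring }

lemma IsMeetJoin.integral_meet_add_integral_join {a b n u : X → ℝ} (h : IsMeetJoin a b n u)
    (ha : IsUnitValued a) (hb : IsUnitValued b) {μ : Measure X} [IsFiniteMeasure μ] :
    ∫ x, n x ∂μ + ∫ x, u x ∂μ = ∫ x, a x ∂μ + ∫ x, b x ∂μ := by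
  rw [← integral_add h.isUnitValued_meet.integrable h.isUnitValued_join.integrable,
    ← integral_add ha.integrable hb.integrable]
  simp_rw [h.add_eq]

end UnitValued

/-! ### Translations of a connected group -/

section Translation

variable {G : Type*} [AddCommGroup G] [MeasurableSpace G] {μ : Measure G} [μ.IsAddLeftInvariant]

lemma integral_integral_shear [MeasurableAdd₂ G] [SFinite μ] {E : Type*} [NormedAddCommGroup E]
    [NormedSpace ℝ E] {F : G → G → E} (hF : Integrable (Function.uncurry F) (μ.prod μ))
    {φ : G → G} (hφ : Measurable φ) :
    ∫ x, ∫ y, F (φ y + x) y ∂μ ∂μ = ∫ x, ∫ y, F x y ∂μ ∂μ := by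
  have hshear : MeasurePreserving (fun w : G × G => (w.1, φ w.1 + w.2)) (μ.prod μ) (μ.prod μ) :=
    (MeasurePreserving.id μ).skew_product (g := fun y x => φ y + x) (by fun_prop)
      (.of_forall fun y => map_add_left_eq_self μ (φ y))
  have hF' : Integrable (fun w : G × G => F (φ w.2 + w.1) w.2) (μ.prod μ) :=
    (hshear.integrable_comp_of_integrable hF.swap).swap
  rw [integral_integral_swap hF', integral_integral_swap hF]
  exact integral_congr_ae (.of_forall fun y => integral_add_left_eq_self (F · y) (φ y))

lemma integral_integral_mul_add [MeasurableAdd₂ G] [IsProbabilityMeasure μ] {f : G → ℝ}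
    (hf : IsUnitValued f) :
    ∫ κ, ∫ x, f x * f (κ + x) ∂μ ∂μ = (∫ x, f x ∂μ) ^ 2 := by
  have hff : IsUnitValued fun w : G × G => f w.2 * f (w.1 + w.2) :=
    (hf.comp measurable_snd).mul (hf.comp (by fun_prop))
  rw [integral_integral_swap hff.integrable]
  simp_rw [integral_const_mul, integral_add_right_eq_self, integral_mul_const, sq]

variable [TopologicalSpace G] [IsTopologicalAddGroup G] [BorelSpace G]

lemma continuous_integral_mul_add [IsLocallyFiniteMeasure μ] [μ.InnerRegularCompactLTTop]
    {f g : G → ℝ} (hf : MemLp f 2 μ) (hg : MemLp g 2 μ) :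
    Continuous fun κ : G => ∫ x, f x * g (κ + x) ∂μ := by
  have : Fact ((2 : ENNReal) ≠ ⊤) := ⟨by simp⟩
  have hcont : Continuous fun κ : G => inner ℝ (hf.toLp f) (DomAddAct.mk κ +ᵥ hg.toLp g) :=
    continuous_const.inner (DomAddAct.continuous_mk.vadd continuous_const)
  convert hcont using 2 with κ
  rw [DomAddAct.mk_vadd_toLp, L2.inner_def]
  refine integral_congr_ae ?_
  filter_upwards [hf.coeFn_toLp, MemLp.coeFn_toLp (f := fun x => g (κ +ᵥ x))
    (hg.comp_measurePreserving (measurePreserving_vadd κ μ))] with x hfx hgx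
  rw [hfx, hgx, vadd_eq_add, real_inner_comm, RCLike.inner_apply, conj_trivial]

variable [PreconnectedSpace G] [μ.InnerRegularCompactLTTop] [IsProbabilityMeasure μ]

lemma exists_integral_mul_add_eq [MeasurableAdd₂ G] {f : G → ℝ} (hf : IsUnitValued f) {c : ℝ}
    (hc : (∫ x, f x ∂μ) ^ 2 ≤ c) (hc' : c ≤ ∫ x, f x * f x ∂μ) :
    ∃ κ, ∫ x, f x * f (κ + x) ∂μ = c := by
  have hff : IsUnitValued fun w : G × G => f w.2 * f (w.1 + w.2) :=
    (hf.comp measurable_snd).mul (hf.comp (by fun_prop))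
  obtain ⟨κ₀, hκ₀⟩ : ∃ κ, ∫ x, f x * f (κ + x) ∂μ ≤ (∫ x, f x ∂μ) ^ 2 := by
    rw [← integral_integral_mul_add hf]
    exact exists_le_integral hff.integrable.integral_prod_left
  exact mem_range_of_exists_le_of_exists_ge
    (continuous_integral_mul_add (hf.memLp 2) (hf.memLp 2)) ⟨κ₀, hκ₀.trans hc⟩
    ⟨0, by simpa using hc'⟩

/- If `f` is far from being an indicator function, it can be spread out in place; otherwise `f * f`
is close to `f`, and a translate of `f` does the job. -/
lemma exists_isMeetJoin_translate [MeasurableAdd₂ G] {f : G → ℝ} (hf : IsUnitValued f) {r : ℝ}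
    (hr₀ : 0 ≤ r) (hr : r ≤ (∫ x, f x ∂μ) * (1 - ∫ x, f x ∂μ)) :
    ∃ (κ : G) (n u : G → ℝ), IsMeetJoin f (fun x => f (κ + x)) n u ∧
      ∫ x, n x ∂μ = ∫ x, f x ∂μ - r := by
  have hv : IsUnitValued fun x => f x * (1 - f x) := hf.mul hf.one_sub
  rcases le_or_gt r (∫ x, f x * (1 - f x) ∂μ) with hrv | hrv
  · obtain ⟨θ, hθ, hθr⟩ : ∃ θ ∈ Set.Icc (0 : ℝ) 1, θ * ∫ x, f x * (1 - f x) ∂μ = r := by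
      rcases (hr₀.trans hrv).eq_or_lt with h | h
      · exact ⟨0, by simp, by linarith⟩
      · exact ⟨r / _, ⟨by positivity, (div_le_one h).mpr hrv⟩, div_mul_cancel₀ _ h.ne'⟩
    refine ⟨0, _, _, by simpa only [zero_add] using hf.isMeetJoin_self hθ, ?_⟩
    rw [integral_sub hf.integrable (hv.integrable.const_mul θ), integral_const_mul, hθr]
  · have hsq : ∫ x, f x * f x ∂μ = ∫ x, f x ∂μ - ∫ x, f x * (1 - f x) ∂μ := by
      rw [← integral_sub hf.integrable hv.integrable]
      exact integral_congr_ae (.of_forall fun x => by ring)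
    obtain ⟨κ, hκ⟩ := exists_integral_mul_add_eq (μ := μ) hf (c := ∫ x, f x ∂μ - r)
      (by linarith) (by linarith)
    exact ⟨κ, _, _, hf.isMeetJoin_mul (hf.comp (measurable_const_add κ)), hκ⟩

end Translation

/-! ### Truncated correlations along dilates -/

section DilatedConv

variable {G : Type*} [AddCommGroup G] [MeasurableSpace G]

/-- The average of `f (z + p • y) * g (z + q • y)` over `y`, as a function of `z`. For `p = 1` and
`q = -1`, it is the convolution of `f` and `g` at `2 • z`. -/
noncomputable def dilatedConv (μ : Measure G) (p q : ℤ) (f g : G → ℝ) (z : G) : ℝ :=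
  ∫ y, f (z + p • y) * g (z + q • y) ∂μ

/-- The integral of `dilatedConv μ p q f g` truncated at height `t`, the analogue of the sum
`∑ x, min (r x) t` over representation counts `r` in Pollard's theorem. -/
noncomputable def pollardSum (μ : Measure G) (p q : ℤ) (t : ℝ) (f g : G → ℝ) : ℝ :=
  ∫ z, min (dilatedConv μ p q f g z) t ∂μ

lemma min_add_min_le_min_add_min {a b n u : ℝ} (t : ℝ) (ha : n ≤ a) (hb : n ≤ b)
    (h : n + u = a + b) : min n t + min u t ≤ min a t + min b t := by
  grind

variable {μ : Measure G} {f g : G → ℝ}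

lemma pollardSum_translate [MeasurableAdd G] [DivisibleBy G ℤ] [μ.IsAddLeftInvariant]
    {p q : ℤ} (hpq : p ≠ q) (t : ℝ) (f g : G → ℝ) (κ : G) :
    pollardSum μ p q t (fun x => f (κ + x)) g = pollardSum μ p q t f g := by
  obtain ⟨η, hη⟩ : ∃ η : G, (p - q) • η = κ :=
    DivisibleBy.surjective_smul G ℤ (sub_ne_zero.mpr hpq) κ
  have htranslate (z : G) :
      dilatedConv μ p q (fun x => f (κ + x)) g z = dilatedConv μ p q f g (-(q • η) + z) := by
    rw [dilatedConv, dilatedConv,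
      ← integral_add_left_eq_self (fun y => f (-(q • η) + z + p • y) * g (-(q • η) + z + q • y)) η]
    have hf (y : G) : -(q • η) + z + p • (η + y) = κ + (z + p • y) := by rw [← hη]; module
    have hg (y : G) : -(q • η) + z + q • (η + y) = z + q • y := by module
    simp_rw [hf, hg]
  simp_rw [pollardSum, htranslate]
  exact integral_add_left_eq_self (fun z => min (dilatedConv μ p q f g z) t) _

variable [MeasurableAdd₂ G] [MeasurableNeg G]

lemma IsUnitValued.mul_dilates (hf : IsUnitValued f) (hg : IsUnitValued g) (p q : ℤ) :
    IsUnitValued fun w : G × G => f (w.1 + p • w.2) * g (w.1 + q • w.2) :=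
  (hf.comp (by fun_prop)).mul (hg.comp (by fun_prop))

lemma IsUnitValued.mul_dilates_left (hf : IsUnitValued f) (hg : IsUnitValued g) (p q : ℤ) (z : G) :
    IsUnitValued fun y : G => f (z + p • y) * g (z + q • y) :=
  (hf.mul_dilates hg p q).comp measurable_prodMk_left

variable [IsProbabilityMeasure μ]

protected lemma IsUnitValued.dilatedConv (hf : IsUnitValued f) (hg : IsUnitValued g) (p q : ℤ) :
    IsUnitValued (dilatedConv μ p q f g) :=
  ⟨(hf.mul_dilates hg p q).measurable.stronglyMeasurable.integral_prod_right.measurable,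
    fun z => (hf.mul_dilates_left hg p q z).integral_mem_Icc⟩

lemma IsUnitValued.min_dilatedConv (hf : IsUnitValued f) (hg : IsUnitValued g) (p q : ℤ) {t : ℝ}
    (ht : t ∈ Set.Icc (0 : ℝ) 1) : IsUnitValued fun z => min (dilatedConv μ p q f g z) t :=
  (hf.dilatedConv hg p q).min_const ht

lemma dilatedConv_mono_left {f' : G → ℝ} (hf : IsUnitValued f) (hf' : IsUnitValued f')
    (hg : IsUnitValued g) (p q : ℤ) (h : ∀ x, f x ≤ f' x) (z : G) :
    dilatedConv μ p q f g z ≤ dilatedConv μ p q f' g z :=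
  integral_mono (hf.mul_dilates_left hg p q z).integrable
    (hf'.mul_dilates_left hg p q z).integrable fun _ =>
      mul_le_mul_of_nonneg_right (h _) (hg.nonneg _)

lemma IsMeetJoin.dilatedConv_add {a b n u : G → ℝ} (h : IsMeetJoin a b n u) (ha : IsUnitValued a)
    (hb : IsUnitValued b) (hg : IsUnitValued g) (p q : ℤ) (z : G) :
    dilatedConv μ p q n g z + dilatedConv μ p q u g z =
      dilatedConv μ p q a g z + dilatedConv μ p q b g z := by
  simp only [dilatedConv]
  rw [← integral_add (h.isUnitValued_meet.mul_dilates_left hg p q z).integrable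
      (h.isUnitValued_join.mul_dilates_left hg p q z).integrable,
    ← integral_add (ha.mul_dilates_left hg p q z).integrable
      (hb.mul_dilates_left hg p q z).integrable]
  simp_rw [← add_mul, h.add_eq]

lemma IsMeetJoin.pollardSum_add_le {a b n u : G → ℝ} (h : IsMeetJoin a b n u)
    (ha : IsUnitValued a) (hb : IsUnitValued b) (hg : IsUnitValued g) (p q : ℤ) {t : ℝ}
    (ht : t ∈ Set.Icc (0 : ℝ) 1) :
    pollardSum μ p q t n g + pollardSum μ p q t u g ≤
      pollardSum μ p q t a g + pollardSum μ p q t b g := by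
  have hn := (h.isUnitValued_meet.min_dilatedConv (μ := μ) hg p q ht).integrable (μ := μ)
  have hu := (h.isUnitValued_join.min_dilatedConv (μ := μ) hg p q ht).integrable (μ := μ)
  have ha' := (ha.min_dilatedConv (μ := μ) hg p q ht).integrable (μ := μ)
  have hb' := (hb.min_dilatedConv (μ := μ) hg p q ht).integrable (μ := μ)
  simp only [pollardSum]
  rw [← integral_add hn hu, ← integral_add ha' hb']
  exact integral_mono (hn.add hu) (ha'.add hb') fun z => min_add_min_le_min_add_min t
    (dilatedConv_mono_left h.isUnitValued_meet ha hg p q h.meet_le_left z)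
    (dilatedConv_mono_left h.isUnitValued_meet hb hg p q h.meet_le_right z)
    (h.dilatedConv_add ha hb hg p q z)

lemma pollardSum_add_le_integral_dilatedConv_mul {h : G → ℝ} (hf : IsUnitValued f)
    (hg : IsUnitValued g) (hh : IsUnitValued h) (p q : ℤ) {t : ℝ} (ht : t ∈ Set.Icc (0 : ℝ) 1) :
    pollardSum μ p q t f g + t * ∫ z, h z ∂μ - t ≤ ∫ z, dilatedConv μ p q f g z * h z ∂μ := by
  have hmin := (hf.min_dilatedConv (μ := μ) hg p q ht).integrable (μ := μ)
  have hth := (hh.integrable (μ := μ)).const_mul t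
  have hsum : Integrable (fun z => min (dilatedConv μ p q f g z) t + t * h z) μ := hmin.add hth
  calc pollardSum μ p q t f g + t * ∫ z, h z ∂μ - t
      = ∫ z, (min (dilatedConv μ p q f g z) t + t * h z - t) ∂μ := by
        rw [integral_sub hsum (integrable_const t), integral_add hmin hth,
          integral_const_mul, integral_const, probReal_univ, one_smul, pollardSum]
    _ ≤ ∫ z, dilatedConv μ p q f g z * h z ∂μ := by
        refine integral_mono (hsum.sub (integrable_const t))
          ((hf.dilatedConv hg p q).mul hh).integrable fun z => ?_
        have hW := mul_le_mul_of_nonneg_right (min_le_left (dilatedConv μ p q f g z) t)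
          (hh.nonneg z)
        have ht' := mul_nonneg (sub_nonneg.mpr (min_le_right (dilatedConv μ p q f g z) t))
          (sub_nonneg.mpr (hh.le_one z))
        linarith

lemma integral_integral_mul_dilates_eq [μ.IsAddLeftInvariant] {h : G → ℝ} (hf : IsUnitValued f)
    (hg : IsUnitValued g) (hh : IsUnitValued h) (p q m : ℤ) :
    ∫ x, ∫ y, f (x + p • y) * g (x + q • y) * h (x + m • y) ∂μ ∂μ =
      ∫ z, dilatedConv μ (p - m) (q - m) f g z * h z ∂μ := by
  have hfgh : IsUnitValued fun w : G × G =>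
      f (w.1 + (p - m) • w.2) * g (w.1 + (q - m) • w.2) * h w.1 :=
    (hf.mul_dilates hg _ _).mul (hh.comp measurable_fst)
  simp_rw [dilatedConv, ← integral_mul_const]
  symm
  rw [← integral_integral_shear hfgh.integrable (measurable_const_smul m)]
  have hshift (x y : G) (k : ℤ) : m • y + x + (k - m) • y = x + k • y := by module
  simp_rw [hshift, add_comm (m • _) _]

end DilatedConv

/-! ### Pollard's inequality -/

section Pollard

/- A counterexample that almost minimises `c i + κ * (A i - t) * (s - A i)` would contradict
`hmid`, because the added penalty is strictly concave in `A i`. -/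
lemma le_of_midpoint_concave {ι : Type*} {A c : ι → ℝ} {t s L : ℝ}
    (hends : ∀ i, A i ∈ Set.Icc t s → L - min (A i - t) (s - A i) ≤ c i)
    (hmid : ∀ ε > 0, ∃ r ∈ Set.Ioc 0 ε, ∀ i, A i ∈ Set.Icc (t + ε) (s - ε) →
      ∃ j k, A j = A i - r ∧ A k = A i + r ∧ c j + c k ≤ 2 * c i)
    {i : ι} (hi : A i ∈ Set.Icc t s) : L ≤ c i := by
  by_contra! hlt
  obtain ⟨ε, hε, hεL⟩ : ∃ ε > 0, c i + 2 * ε = L :=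
    ⟨(L - c i) / 2, by linarith, by linarith⟩
  obtain ⟨κ, hκ, hκε⟩ : ∃ κ > 0, (A i - t) * (s - A i) * κ < ε := exists_pos_mul_lt hε _
  let Ψ (j : ι) : ℝ := c j + κ * ((A j - t) * (s - A j))
  have hcΨ {j : ι} (hj : A j ∈ Set.Icc t s) : c j ≤ Ψ j :=
    le_add_of_nonneg_right <|
      mul_nonneg hκ.le (mul_nonneg (sub_nonneg.mpr hj.1) (sub_nonneg.mpr hj.2))
  let S : Set ℝ := Ψ '' {j | A j ∈ Set.Icc t s}
  have hiS : Ψ i ∈ S := ⟨i, hi, rfl⟩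
  have hbdd : BddBelow S := by
    refine ⟨L - (s - t), ?_⟩
    rintro _ ⟨j, hj, rfl⟩
    linarith [hends j hj, hcΨ hj, min_le_left (A j - t) (s - A j), hj.2]
  obtain ⟨r, ⟨hr, hrε⟩, hstep⟩ := hmid ε hε
  obtain ⟨_, ⟨j, hj, rfl⟩, hΨj⟩ : ∃ x ∈ S, x < min (sInf S + κ * r ^ 2) (L - ε) :=
    exists_lt_of_csInf_lt ⟨_, hiS⟩ <| lt_min (lt_add_of_pos_right _ (by positivity)) <|
      (csInf_le hbdd hiS).trans_lt (by simp only [Ψ]; linarith)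
  have hmin : ε < min (A j - t) (s - A j) := by
    linarith [hends j hj, hcΨ hj, hΨj.trans_le (min_le_right _ _)]
  obtain ⟨hjt, hjs⟩ := lt_min_iff.mp hmin
  obtain ⟨k, l, hk, hl, hkl⟩ := hstep j ⟨by linarith, by linarith⟩
  have hΨk : sInf S ≤ Ψ k := csInf_le hbdd ⟨k, ⟨by linarith, by linarith⟩, rfl⟩
  have hΨl : sInf S ≤ Ψ l := csInf_le hbdd ⟨l, ⟨by linarith, by linarith⟩, rfl⟩
  have hconcave : Ψ k + Ψ l ≤ 2 * Ψ j - 2 * (κ * r ^ 2) := by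
    simp only [Ψ, hk, hl]
    linarith
  linarith [hΨj.trans_le (min_le_left _ _)]

variable {G : Type*} [AddCommGroup G] [TopologicalSpace G] [IsTopologicalAddGroup G]
  [CompactSpace G] [DivisibleBy G ℤ] [MeasurableSpace G] [BorelSpace G] {μ : Measure G}
  [μ.IsAddHaarMeasure]

lemma integral_add_zsmul {f : G → ℝ} (hf : Measurable f) (z : G) {p : ℤ} (hp : p ≠ 0) :
    ∫ y, f (z + p • y) ∂μ = ∫ y, f y ∂μ := by
  have hpres : MeasurePreserving (fun y => z + p • y) μ μ :=
    (measurePreserving_add_left μ z).comp (Measure.measurePreserving_zsmul μ hp)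
  conv_rhs => rw [← hpres.map_eq]
  rw [integral_map hpres.measurable.aemeasurable hf.aestronglyMeasurable]

variable [SecondCountableTopology G] [IsProbabilityMeasure μ] {f g : G → ℝ} {p q : ℤ} {t : ℝ}

lemma dilatedConv_le (hf : IsUnitValued f) (hg : IsUnitValued g) (hp : p ≠ 0) (q : ℤ) (z : G) :
    dilatedConv μ p q f g z ≤ ∫ x, f x ∂μ := by
  rw [← integral_add_zsmul hf.measurable z hp]
  exact integral_mono (hf.mul_dilates_left hg p q z).integrable
    (hf.comp (by fun_prop)).integrable fun _ =>
      mul_le_of_le_one_right (hf.nonneg _) (hg.le_one _)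

lemma le_dilatedConv (hf : IsUnitValued f) (hg : IsUnitValued g) (hp : p ≠ 0) (hq : q ≠ 0)
    (z : G) : ∫ x, f x ∂μ + ∫ x, g x ∂μ - 1 ≤ dilatedConv μ p q f g z := by
  have hfp : IsUnitValued fun y => f (z + p • y) := hf.comp (by fun_prop)
  have hgq : IsUnitValued fun y => g (z + q • y) := hg.comp (by fun_prop)
  calc ∫ x, f x ∂μ + ∫ x, g x ∂μ - 1
      = ∫ y, (f (z + p • y) - (1 - g (z + q • y))) ∂μ := by
        rw [integral_sub hfp.integrable hgq.one_sub.integrable,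
          integral_sub (integrable_const 1) hgq.integrable,
          integral_add_zsmul hf.measurable z hp, integral_add_zsmul hg.measurable z hq,
          integral_const, probReal_univ, one_smul]
        ring
    _ ≤ dilatedConv μ p q f g z :=
        integral_mono (hfp.integrable.sub hgq.one_sub.integrable)
          (hf.mul_dilates_left hg p q z).integrable fun y => by
            have := mul_nonneg (hfp.one_sub.nonneg y) (hgq.one_sub.nonneg y)
            dsimp only
            linarith

lemma integral_dilatedConv (hf : IsUnitValued f) (hg : IsUnitValued g) (hpq : p ≠ q) :
    ∫ z, dilatedConv μ p q f g z ∂μ = (∫ x, f x ∂μ) * ∫ x, g x ∂μ := by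
  have hfg : IsUnitValued fun w : G × G => f w.1 * g (w.1 + (q - p) • w.2) :=
    (hf.comp measurable_fst).mul (hg.comp (by fun_prop))
  calc ∫ z, dilatedConv μ p q f g z ∂μ
      = ∫ z, ∫ y, f (p • y + z) * g (p • y + z + (q - p) • y) ∂μ ∂μ := by
        have hshift (z y : G) : p • y + z + (q - p) • y = z + q • y := by module
        simp_rw [dilatedConv, hshift, add_comm (p • _) _]
    _ = ∫ z, ∫ y, f z * g (z + (q - p) • y) ∂μ ∂μ :=
        integral_integral_shear (F := fun z y => f z * g (z + (q - p) • y)) hfg.integrable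
          (measurable_const_smul p)
    _ = (∫ x, f x ∂μ) * ∫ x, g x ∂μ := by
        simp_rw [integral_const_mul,
          integral_add_zsmul hg.measurable _ (sub_ne_zero.mpr hpq.symm), integral_mul_const]

lemma mul_integral_le_pollardSum (hf : IsUnitValued f) (hg : IsUnitValued g) (hp : p ≠ 0)
    (hpq : p ≠ q) (ht : 0 ≤ t) (htf : t ≤ ∫ x, f x ∂μ) :
    t * ∫ x, g x ∂μ ≤ pollardSum μ p q t f g := by
  have hmin := hf.min_dilatedConv (μ := μ) hg p q ⟨ht, htf.trans hf.integral_mem_Icc.2⟩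
  rcases (ht.trans htf).eq_or_lt with hf₀ | hf₀
  · obtain rfl : t = 0 := by linarith
    rw [zero_mul]
    exact hmin.integral_mem_Icc.1
  refine le_of_mul_le_mul_left ?_ hf₀
  calc (∫ x, f x ∂μ) * (t * ∫ x, g x ∂μ)
      = ∫ z, t * dilatedConv μ p q f g z ∂μ := by
        rw [integral_const_mul, integral_dilatedConv hf hg hpq, mul_left_comm]
    _ ≤ ∫ z, (∫ x, f x ∂μ) * min (dilatedConv μ p q f g z) t ∂μ := by
        refine integral_mono ((hf.dilatedConv hg p q).integrable.const_mul _)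
          (hmin.integrable.const_mul _) fun z => ?_
        dsimp only
        rw [mul_min_of_nonneg _ _ hf₀.le]
        refine le_min (mul_le_mul_of_nonneg_right htf ((hf.dilatedConv hg p q).nonneg z)) ?_
        rw [mul_comm _ t]
        exact mul_le_mul_of_nonneg_left (dilatedConv_le hf hg hp q z) ht
    _ = (∫ x, f x ∂μ) * pollardSum μ p q t f g := integral_const_mul _ _

lemma integral_add_integral_sub_one_le_pollardSum (hf : IsUnitValued f) (hg : IsUnitValued g)
    (hp : p ≠ 0) (hq : q ≠ 0) (ht : t ∈ Set.Icc (0 : ℝ) 1)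
    (hfg : ∫ x, f x ∂μ + ∫ x, g x ∂μ - 1 ≤ t) :
    ∫ x, f x ∂μ + ∫ x, g x ∂μ - 1 ≤ pollardSum μ p q t f g := by
  calc ∫ x, f x ∂μ + ∫ x, g x ∂μ - 1
      = ∫ _, (∫ x, f x ∂μ + ∫ x, g x ∂μ - 1) ∂μ := by simp
    _ ≤ pollardSum μ p q t f g :=
        integral_mono (integrable_const _) (hf.min_dilatedConv hg p q ht).integrable
          fun z => le_min (le_dilatedConv hf hg hp hq z) hfg

variable [PreconnectedSpace G]

lemma exists_pollardSum_add_le (hf : IsUnitValued f) (hg : IsUnitValued g) (hpq : p ≠ q)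
    (ht : t ∈ Set.Icc (0 : ℝ) 1) {r : ℝ} (hr₀ : 0 ≤ r)
    (hr : r ≤ (∫ x, f x ∂μ) * (1 - ∫ x, f x ∂μ)) :
    ∃ n u : G → ℝ, IsUnitValued n ∧ IsUnitValued u ∧ ∫ x, n x ∂μ = ∫ x, f x ∂μ - r ∧
      ∫ x, u x ∂μ = ∫ x, f x ∂μ + r ∧
      pollardSum μ p q t n g + pollardSum μ p q t u g ≤ 2 * pollardSum μ p q t f g := by
  obtain ⟨κ, n, u, hnu, hn⟩ := exists_isMeetJoin_translate hf hr₀ hr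
  have hfκ : IsUnitValued fun x => f (κ + x) := hf.comp (measurable_const_add κ)
  have hmass := hnu.integral_meet_add_integral_join hf hfκ (μ := μ)
  have hsum := hnu.pollardSum_add_le hf hfκ hg p q ht (μ := μ)
  rw [integral_add_left_eq_self] at hmass
  rw [pollardSum_translate hpq] at hsum
  exact ⟨n, u, hnu.isUnitValued_meet, hnu.isUnitValued_join, hn, by linarith, by linarith⟩

theorem mul_le_pollardSum (hf : IsUnitValued f) (hg : IsUnitValued g) (hp : p ≠ 0) (hq : q ≠ 0)
    (hpq : p ≠ q) (ht : 0 ≤ t) (htf : t ≤ ∫ x, f x ∂μ) (htg : t ≤ ∫ x, g x ∂μ)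
    (hfg : ∫ x, f x ∂μ + ∫ x, g x ∂μ - t ≤ 1) :
    t * (∫ x, f x ∂μ + ∫ x, g x ∂μ - t) ≤ pollardSum μ p q t f g := by
  set b := ∫ x, g x ∂μ
  have ht₁ : t ≤ 1 := htg.trans hg.integral_mem_Icc.2
  suffices h : t * (b - t) ≤ pollardSum μ p q t f g - t * ∫ x, f x ∂μ by linarith
  refine le_of_midpoint_concave (ι := {f : G → ℝ // IsUnitValued f}) (i := ⟨f, hf⟩)
    (A := fun f => ∫ x, f.1 x ∂μ) (c := fun f => pollardSum μ p q t f.1 g - t * ∫ x, f.1 x ∂μ)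
    (t := t) (s := 1 + t - b) ?ends ?midpoint ⟨htf, by dsimp only; linarith⟩
  case ends =>
    rintro ⟨f, hf⟩ ⟨hta, has⟩
    dsimp only at hta has ⊢
    have hlower := mul_integral_le_pollardSum hf hg hp hpq ht hta
    have hupper := integral_add_integral_sub_one_le_pollardSum hf hg hp hq ⟨ht, ht₁⟩ (by linarith)
    rw [sub_le_comm]
    refine le_min ?_ ?_
    · linarith [mul_nonneg (sub_nonneg.mpr ht₁) (sub_nonneg.mpr hta)]
    · linarith [mul_nonneg ht (sub_nonneg.mpr has)]
  case midpoint =>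
    intro ε hε
    refine ⟨min ε (ε ^ 2), ⟨by positivity, min_le_left _ _⟩, ?_⟩
    rintro ⟨f, hf⟩ ⟨hta, has⟩
    dsimp only at hta has
    have hr : min ε (ε ^ 2) ≤ (∫ x, f x ∂μ) * (1 - ∫ x, f x ∂μ) :=
      (min_le_right _ _).trans <| by
        rw [sq]; exact mul_le_mul (by linarith) (by linarith) hε.le (by linarith)
    obtain ⟨n, u, hn, hu, hn_mass, hu_mass, hsum⟩ :=
      exists_pollardSum_add_le hf hg hpq ⟨ht, ht₁⟩ (by positivity) hr
    refine ⟨⟨n, hn⟩, ⟨u, hu⟩, hn_mass, hu_mass, ?_⟩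
    dsimp only
    rw [hn_mass, hu_mass]
    linarith

theorem mul_le_integral_integral_mul_dilates {h : G → ℝ} (hf : IsUnitValued f)
    (hg : IsUnitValued g) (hh : IsUnitValued h) {m : ℤ} (hpq : p ≠ q) (hpm : p ≠ m) (hqm : q ≠ m)
    (ht : 0 ≤ t) (htf : t ≤ ∫ x, f x ∂μ) (htg : t ≤ ∫ x, g x ∂μ)
    (hfg : ∫ x, f x ∂μ + ∫ x, g x ∂μ - t ≤ 1) :
    t * (∫ x, f x ∂μ + ∫ x, g x ∂μ + ∫ x, h x ∂μ - 1 - t) ≤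
      ∫ x, ∫ y, f (x + p • y) * g (x + q • y) * h (x + m • y) ∂μ ∂μ := by
  have hpollard := mul_le_pollardSum hf hg (sub_ne_zero.mpr hpm) (sub_ne_zero.mpr hqm)
    (sub_left_injective.ne hpq) ht htf htg hfg
  have htruncate := pollardSum_add_le_integral_dilatedConv_mul (μ := μ) hf hg hh (p - m) (q - m)
    ⟨ht, htf.trans hf.integral_mem_Icc.2⟩
  rw [integral_integral_mul_dilates_eq hf hg hh]
  linarith

end Pollard

theorem stmt_16_general {G : Type*} [AddCommGroup G] [TopologicalSpace G]
    [IsTopologicalAddGroup G] [CompactSpace G] [PreconnectedSpace G] [SecondCountableTopology G]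
    [DivisibleBy G ℤ] [MeasurableSpace G] [BorelSpace G] {μ : Measure G} [μ.IsAddHaarMeasure]
    [IsProbabilityMeasure μ] {F₁ F₂ F₃ : G → ℝ}
    (hF₁ : IsUnitValued F₁) (hF₂ : IsUnitValued F₂) (hF₃ : IsUnitValued F₃) {δ₁ δ₂ δ₃ δ : ℝ}
    (hδ₁ : δ₁ = ∫ x, F₁ x ∂μ) (hδ₂ : δ₂ = ∫ x, F₂ x ∂μ) (hδ₃ : δ₃ = ∫ x, F₃ x ∂μ)
    (hδ : δ = min δ₁ (min δ₂ δ₃))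
    {m₁ m₂ m₃ : ℤ} (h12 : m₁ ≠ m₂) (h13 : m₁ ≠ m₃) (h23 : m₂ ≠ m₃) :
    (δ₁ + δ₂ + δ₃ ≤ 1 + 2 * δ →
      (1 / 4) * max (δ₁ + δ₂ + δ₃ - 1) 0 ^ 2 ≤
        ∫ x, ∫ y, F₁ (x + m₁ • y) * F₂ (x + m₂ • y) * F₃ (x + m₃ • y) ∂μ ∂μ) ∧
    δ * (δ₁ + δ₂ + δ₃ - 1 - δ) ≤
      ∫ x, ∫ y, F₁ (x + m₁ • y) * F₂ (x + m₂ • y) * F₃ (x + m₃ • y) ∂μ ∂μ := by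
  have hpair : δ₁ + δ₂ - δ ≤ 1 ∨ δ₁ + δ₃ - δ ≤ 1 := by
    have hδ₁1 : δ₁ ≤ 1 := hδ₁ ▸ hF₁.integral_mem_Icc.2
    have hδ₂1 : δ₂ ≤ 1 := hδ₂ ▸ hF₂.integral_mem_Icc.2
    grind
  have hδ0 : 0 ≤ δ := by
    rw [hδ, hδ₁, hδ₂, hδ₃]
    exact le_min hF₁.integral_mem_Icc.1 (le_min hF₂.integral_mem_Icc.1 hF₃.integral_mem_Icc.1)
  obtain ⟨hle₁, hle₂, hle₃⟩ : δ ≤ δ₁ ∧ δ ≤ δ₂ ∧ δ ≤ δ₃ := by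
    simpa only [le_min_iff] using hδ.le
  have bound₁₂ (t : ℝ) :=
    mul_le_integral_integral_mul_dilates (μ := μ) hF₁ hF₂ hF₃ h12 h13 h23 (t := t)
  have bound₁₃ (t : ℝ) :=
    mul_le_integral_integral_mul_dilates (μ := μ) hF₁ hF₃ hF₂ h13 h12 h23.symm (t := t)
  simp_rw [mul_right_comm (F₁ _) (F₃ _)] at bound₁₃
  rw [← hδ₁, ← hδ₂, ← hδ₃] at bound₁₂ bound₁₃
  refine ⟨fun hsum => ?_, ?_⟩
  · rcases le_total (δ₁ + δ₂ + δ₃ - 1) 0 with h | h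
    · rw [max_eq_right h]
      linarith [bound₁₂ 0 le_rfl (by linarith) (by linarith) (by linarith)]
    · rw [max_eq_left h]
      linarith [bound₁₂ ((δ₁ + δ₂ + δ₃ - 1) / 2) (by linarith) (by linarith) (by linarith)
        (by linarith)]
  · rcases hpair with h | h
    · exact bound₁₂ δ hδ0 hle₁ hle₂ h
    · linarith [bound₁₃ δ hδ0 hle₁ hle₃ h]

instance (d : ℕ) : (torusMeasure d).IsAddHaarMeasure := by
  unfold torusMeasure; infer_instance

instance (d : ℕ) : IsProbabilityMeasure (torusMeasure d) := by
  have : IsProbabilityMeasure (volume : Measure (AddCircle (1 : ℝ))) := ⟨by simp⟩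
  unfold torusMeasure; infer_instance

theorem stmt_16 (d : ℕ) (hd : 1 ≤ d)
    (F₁ F₂ F₃ : (Fin d → AddCircle (1 : ℝ)) → ℝ)
    (hm₁ : Measurable F₁) (hm₂ : Measurable F₂) (hm₃ : Measurable F₃)
    (hr₁ : ∀ x, F₁ x ∈ Set.Icc (0 : ℝ) 1) (hr₂ : ∀ x, F₂ x ∈ Set.Icc (0 : ℝ) 1)
    (hr₃ : ∀ x, F₃ x ∈ Set.Icc (0 : ℝ) 1)
    (δ₁ δ₂ δ₃ δ : ℝ)
    (hδ₁ : δ₁ = ∫ x, F₁ x ∂(torusMeasure d))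
    (hδ₂ : δ₂ = ∫ x, F₂ x ∂(torusMeasure d))
    (hδ₃ : δ₃ = ∫ x, F₃ x ∂(torusMeasure d))
    (hδ : δ = min δ₁ (min δ₂ δ₃))
    (m₁ m₂ m₃ : ℤ) (h12 : m₁ ≠ m₂) (h13 : m₁ ≠ m₃) (h23 : m₂ ≠ m₃) :
    (δ₁ + δ₂ + δ₃ ≤ 1 + 2 * δ →
      (1 / 4) * max (δ₁ + δ₂ + δ₃ - 1) 0 ^ 2 ≤
        ∫ x, ∫ y, F₁ (x + m₁ • y) * F₂ (x + m₂ • y) * F₃ (x + m₃ • y)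
          ∂(torusMeasure d) ∂(torusMeasure d)) ∧
    (1 + 2 * δ < δ₁ + δ₂ + δ₃ →
      δ * (δ₁ + δ₂ + δ₃ - 1 - δ) ≤
        ∫ x, ∫ y, F₁ (x + m₁ • y) * F₂ (x + m₂ • y) * F₃ (x + m₃ • y)
          ∂(torusMeasure d) ∂(torusMeasure d)) := by
  have h := stmt_16_general ⟨hm₁, hr₁⟩ ⟨hm₂, hr₂⟩ ⟨hm₃, hr₃⟩ hδ₁ hδ₂ hδ₃ hδ h12 h13 h23
  exact ⟨h.1, fun _ => h.2⟩
end

section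
/- Let m ≥ 3 be a natural number. Then there exist a₁, …, a_{m²} ∈ ℝ/ℤ such that the strips S_i := {(x,y) ∈ (ℝ/ℤ)² : x + i·y ∈ a_i + [0, 2/m] mod 1} for i = 1, …, m² cover the entire torus (ℝ/ℤ)². -/
open Filter
open scoped Classical

/-!
A point of the circle is caught by one of `n` consecutive half-open arcs of length `s` as soon as
the arcs together are as long as the circle. This is used twice. Write a slope below `m * n` as
`m * k + j` with `k < n` and `j < m`. Given `y`, arcs of length `p / n` provide a `k` for which
`y = -(k * p / n) - s` with `p / m ≤ s < p / m + p / n`. Put `a = -(j * k * p / n)` for the slope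
`m * k + j`. Relative to `a`, the point `z + j * y` is `z - j * s`, whatever `z = x + m * k * y` is;
since `m * s ≥ p`, the arcs of length `s` provide a `j < m` that brings it into `[0, s)`.
-/

section AddCircle

variable {p : ℝ} [Fact (0 < p)] {m n : ℕ}

theorem exists_eq_nsmul_coe_add_coe_mem_Ico {s : ℝ} (hs : p ≤ n * s) (z : AddCircle p) :
    ∃ j : Fin n, ∃ t ∈ Set.Ico 0 s, z = (j : ℕ) • (s : AddCircle p) + (t : AddCircle p) := by
  obtain ⟨u, ⟨hu₀, hup⟩, rfl⟩ := AddCircle.eq_coe_Ico z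
  have hs₀ : 0 < s := pos_of_mul_pos_right ((Fact.out : 0 < p).trans_le hs) n.cast_nonneg
  have hfloor_le : ⌊u / s⌋₊ * s ≤ u := (le_div_iff₀ hs₀).1 (Nat.floor_le (by positivity))
  have hlt_floor : u < (⌊u / s⌋₊ + 1) * s := (div_lt_iff₀ hs₀).1 (Nat.lt_floor_add_one _)
  have hfloor_lt : ⌊u / s⌋₊ < n :=
    (Nat.floor_lt (by positivity)).2 ((div_lt_iff₀ hs₀).2 (hup.trans_le hs))
  refine ⟨⟨_, hfloor_lt⟩, u - ⌊u / s⌋₊ * s, ⟨by linarith, by linarith⟩, ?_⟩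
  rw [← AddCircle.coe_nsmul, ← AddCircle.coe_add, nsmul_eq_mul, add_sub_cancel]

theorem exists_nsmul_coe_div_eq_neg_add_coe (hn : 0 < n) (l : ℝ) (y : AddCircle p) :
    ∃ k : Fin n, ∃ s ∈ Set.Ico l (l + p / n),
      y = -((k : ℕ) • ((p / n : ℝ) : AddCircle p) + (s : AddCircle p)) := by
  have hp : p ≤ n * (p / n) := by field_simp; rfl
  obtain ⟨k, r, ⟨hr₀, hr⟩, hy⟩ :=
    exists_eq_nsmul_coe_add_coe_mem_Ico hp (-y - (l : AddCircle p))
  refine ⟨k, l + r, ⟨by linarith, by linarith⟩, ?_⟩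
  rw [AddCircle.coe_add, add_left_comm, ← hy]
  abel

theorem exists_forall_exists_add_nsmul_eq (hm : 0 < m) (hn : 0 < n) (y : AddCircle p) :
    ∃ k : Fin n, ∀ z : AddCircle p, ∃ j : Fin m, ∃ t ∈ Set.Ico 0 (p / m + p / n),
      z + (j : ℕ) • y =
        -((j : ℕ) • (k : ℕ) • ((p / n : ℝ) : AddCircle p)) + (t : AddCircle p) := by
  obtain ⟨k, s, ⟨hs, hs'⟩, rfl⟩ := exists_nsmul_coe_div_eq_neg_add_coe hn (p / m) y
  have hp : p ≤ m * s := (div_le_iff₀' (by positivity)).1 hs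
  refine ⟨k, fun z => ?_⟩
  obtain ⟨j, t, ⟨ht₀, ht⟩, rfl⟩ := exists_eq_nsmul_coe_add_coe_mem_Ico hp z
  refine ⟨j, t, ⟨ht₀, ht.trans hs'⟩, ?_⟩
  rw [smul_neg, smul_add]
  abel

theorem stmt_17_general (hm : 0 < m) (hn : 0 < n) :
    ∃ a : Fin (n * m) → AddCircle p, ∀ x y : AddCircle p, ∃ i : Fin (n * m),
      ∃ t ∈ Set.Ico 0 (p / m + p / n), x + (i : ℕ) • y = a i + (t : AddCircle p) := by
  let shift : Fin n × Fin m → AddCircle p := fun (k, j) =>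
    -((j : ℕ) • (k : ℕ) • ((p / n : ℝ) : AddCircle p))
  refine ⟨shift ∘ finProdFinEquiv.symm, fun x y => ?_⟩
  obtain ⟨k, hk⟩ := exists_forall_exists_add_nsmul_eq hm hn y
  obtain ⟨j, t, ht, hj⟩ := hk (x + (m * k : ℕ) • y)
  refine ⟨finProdFinEquiv (k, j), t, ht, ?_⟩
  rw [Function.comp_apply, Equiv.symm_apply_apply, ← hj, finProdFinEquiv_apply_val,
    add_comm (j : ℕ), add_nsmul, add_assoc]

end AddCircle

theorem stmt_17 (m : ℕ) (hm : 3 ≤ m) :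
    ∃ a : Fin (m ^ 2) → AddCircle (1 : ℝ),
      ∀ x y : AddCircle (1 : ℝ), ∃ i : Fin (m ^ 2),
        ∃ t : ℝ, t ∈ Set.Icc (0 : ℝ) (2 / (m : ℝ)) ∧
          x + ((i : ℕ) + 1) • y = a i + (t : AddCircle (1 : ℝ)) := by
  obtain ⟨a, ha⟩ := stmt_17_general (p := 1) (m := m) (n := m) (by lia) (by lia)
  rw [sq]
  refine ⟨a, fun x y => ?_⟩
  obtain ⟨i, t, ht, hi⟩ := ha (x + y) y
  refine ⟨i, t, Set.Ico_subset_Icc_self ?_, ?_⟩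
  · rwa [← add_div, one_add_one_eq_two] at ht
  · rw [← hi, succ_nsmul', add_assoc]
end
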